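/- Let 1 ≤ k ≤ n-1 and let f be the matchless subexcedant function on [n] given by f(1)=1, f(i)=i-1 for 2 ≤ i ≤ k+1, and f(i)=k for k+1 ≤ i ≤ n (i.e., the word 1 1 2 3 ⋯ k-1 k k ⋯ k). Let σ = (n f(n)) ∘ ⋯ ∘ (2 f(2)) ∘ (1 f(1)). Then σ is the n-cycle (1 k+1 k+2 ⋯ n k k-1 ⋯ 2); moreover (-1)^{inv(σ)} = (-1)^{n-1}, EXCv(σ) = [n] \ [k], and RLMv(σ) = [k]. -/

import Mathlib

open Finset

/-- Number of inversions of a permutation of `Fin n`. -/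
def inversions {n : ℕ} (π : Equiv.Perm (Fin n)) : ℕ :=
  (Finset.univ.filter fun p : Fin n × Fin n => p.1 < p.2 ∧ π p.2 < π p.1).card

/-- Excedance indices of a permutation. -/
def EXCi {n : ℕ} (π : Equiv.Perm (Fin n)) : Finset (Fin n) :=
  Finset.univ.filter fun i => i < π i

/-- Excedance values of a permutation. -/
def EXCv {n : ℕ} (π : Equiv.Perm (Fin n)) : Finset (Fin n) :=
  (EXCi π).image π

/-- The permutation `(n f(n)) ∘ ⋯ ∘ (2 f(2)) ∘ (1 f(1))` associated to a
subexcedant function `f` (the transposition `(1 f(1))` is applied first). -/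
def sefPerm {n : ℕ} (f : Fin n → Fin n) : Equiv.Perm (Fin n) :=
  ((List.ofFn fun i : Fin n => Equiv.swap i (f i)).reverse).prod

/-- Right-to-left minima values of a permutation. -/
def RLMv {n : ℕ} (π : Equiv.Perm (Fin n)) : Finset (Fin n) :=
  ((Finset.univ.filter fun i => ∀ j, i < j → π i < π j).image π)

/-- The product of the first `m` transpositions. -/
def partPerm {n : ℕ} (f : Fin n → Fin n) (m : ℕ) : Equiv.Perm (Fin n) :=
  (((List.ofFn fun i : Fin n => Equiv.swap i (f i)).take m).reverse).prod

lemma partPerm_zero {n : ℕ} (f : Fin n → Fin n) : partPerm f 0 = 1 := by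
  simp [partPerm]

lemma partPerm_succ {n : ℕ} (f : Fin n → Fin n) (m : ℕ) (hm : m < n) :
    partPerm f (m + 1) = Equiv.swap ⟨m, hm⟩ (f ⟨m, hm⟩) * partPerm f m := by
  unfold partPerm
  rw [List.take_add_one]
  simp [hm]

lemma partPerm_self {n : ℕ} (f : Fin n → Fin n) : partPerm f n = sefPerm f := by
  unfold partPerm sefPerm
  rw [List.take_of_length_le (by simp)]

lemma partPerm_val (n k : ℕ) (hk1 : 1 ≤ k) (hk2 : k ≤ n - 1)
    (f : Fin n → Fin n)
    (hf : ∀ i : Fin n, ((f i : ℕ) + 1) =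
        if (i : ℕ) = 0 then 1 else if (i : ℕ) ≤ k then (i : ℕ) else k)
    (m : ℕ) (hm : m ≤ n) (i : Fin n) :
    (partPerm f m i : ℕ) = if m ≤ (i : ℕ) then (i : ℕ)
      else if (i : ℕ) = 0 then min (m - 1) k
      else if (i : ℕ) < k then (i : ℕ) - 1
      else if (i : ℕ) + 1 < m then (i : ℕ) + 1
      else k - 1 := by
  induction m with
  | zero => simp [partPerm_zero]
  | succ m ih =>
    have ih := ih (by omega)
    have hfm := hf ⟨m, hm⟩
    rw [partPerm_succ f m hm, Equiv.Perm.mul_apply, Equiv.swap_apply_def]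
    generalize partPerm f m i = x at *
    generalize f ⟨m, hm⟩ = y at *
    simp only [Fin.ext_iff, apply_ite Fin.val] at *
    split_ifs at * <;> omega

lemma partPerm_sign (n k : ℕ) (hk1 : 1 ≤ k)
    (f : Fin n → Fin n)
    (hf : ∀ i : Fin n, ((f i : ℕ) + 1) =
        if (i : ℕ) = 0 then 1 else if (i : ℕ) ≤ k then (i : ℕ) else k)
    (m : ℕ) (hm : m + 1 ≤ n) :
    Equiv.Perm.sign (partPerm f (m + 1)) = (-1) ^ m := by
  induction m with
  | zero =>
    have h := hf ⟨0, hm⟩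
    have h2 : f ⟨0, hm⟩ = ⟨0, hm⟩ := by
      apply Fin.ext
      simpa using h
    rw [partPerm_succ f 0 hm, partPerm_zero, h2]
    simp
  | succ m ih =>
    have ih := ih (by omega)
    have h := hf ⟨m + 1, hm⟩
    have h2 : (⟨m + 1, hm⟩ : Fin n) ≠ f ⟨m + 1, hm⟩ := by
      intro h3
      rw [← h3] at h
      simp only at h
      split_ifs at h <;> omega
    rw [partPerm_succ f (m + 1) hm, Equiv.Perm.sign_mul, ih, Equiv.Perm.sign_swap h2, pow_succ']

lemma sign_eq_inversions {n : ℕ} (π : Equiv.Perm (Fin n)) :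
    (Equiv.Perm.sign π : ℤˣ) = (-1) ^ inversions π := by
  rw [Equiv.Perm.sign_eq_prod_prod_Ioi]
  have : inversions π = ∑ i : Fin n, ((Finset.Ioi i).filter fun j => π j < π i).card := by
    unfold inversions
    rw [Finset.card_filter, Fintype.sum_prod_type]
    refine Finset.sum_congr rfl fun i _ => ?_
    rw [← Finset.card_filter]
    congr 1
    ext j
    simp
  rw [this, ← Finset.prod_pow_eq_pow_sum]
  refine Finset.prod_congr rfl fun i _ => ?_
  rw [← Finset.prod_const, Finset.prod_filter]
  refine Finset.prod_congr rfl fun j hj => ?_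
  have hne : π i ≠ π j := fun h => (Finset.mem_Ioi.1 hj).ne (π.injective h)
  rcases lt_or_gt_of_ne hne with h | h
  · simp [h, h.not_gt]
  · simp [h, h.not_gt]

/-- Here `Fin n` represents `[n]` via `i ↦ i + 1`, so `(f i : ℕ) + 1` is
the value of `f` at the (1-based) position `(i : ℕ) + 1`.  The hypothesis
`hf` says `f` is the matchless word `1 1 2 3 ⋯ (k-1) k k ⋯ k`, and the first
conjunct of the conclusion says that `σ = sefPerm f` is the `n`-cycle
`(1 (k+1) (k+2) ⋯ n k (k-1) ⋯ 2)`. -/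
theorem stmt17 (n k : ℕ) (hk1 : 1 ≤ k) (hk2 : k ≤ n - 1)
    (f : Fin n → Fin n)
    (hf : ∀ i : Fin n, ((f i : ℕ) + 1) =
        if (i : ℕ) = 0 then 1 else if (i : ℕ) ≤ k then (i : ℕ) else k) :
    (∀ i : Fin n, ((sefPerm f i : ℕ) + 1) =
        if (i : ℕ) = 0 then k + 1
        else if (i : ℕ) < k then (i : ℕ)
        else if (i : ℕ) < n - 1 then (i : ℕ) + 2
        else k)
    ∧ ((-1 : ℤ) ^ inversions (sefPerm f) = (-1) ^ (n - 1))
    ∧ EXCv (sefPerm f) = Finset.univ.filter (fun j : Fin n => k ≤ (j : ℕ))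
    ∧ RLMv (sefPerm f) = Finset.univ.filter (fun j : Fin n => (j : ℕ) < k) := by
  have hn : n - 1 + 1 = n := by omega
  have hv : ∀ i : Fin n, ((sefPerm f i : ℕ) + 1) =
        if (i : ℕ) = 0 then k + 1
        else if (i : ℕ) < k then (i : ℕ)
        else if (i : ℕ) < n - 1 then (i : ℕ) + 2
        else k := by
    intro i
    have h := partPerm_val n k hk1 hk2 f hf n le_rfl i
    rw [partPerm_self] at h
    have := i.2
    rw [h]
    split_ifs <;> omega
  refine ⟨hv, ?_, ?_, ?_⟩
  · have h1 := partPerm_sign n k hk1 f hf (n - 1) (by omega)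
    rw [hn, partPerm_self, sign_eq_inversions] at h1
    have h2 := congrArg (fun u : ℤˣ => (u : ℤ)) h1
    simpa using h2
  · ext j
    simp only [EXCv, EXCi, Finset.mem_image, Finset.mem_filter, Finset.mem_univ, true_and]
    constructor
    · rintro ⟨i, hi, rfl⟩
      have := hv i
      rw [Fin.lt_def] at hi
      split_ifs at this <;> omega
    · intro hj
      have hj2 := j.2
      by_cases hjk : (j : ℕ) = k
      · have h := hv ⟨0, by omega⟩
        simp only [if_true] at h
        refine ⟨⟨0, by omega⟩, ?_, ?_⟩
        · rw [Fin.lt_def]; simp only; omega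
        · apply Fin.ext; omega
      · have h := hv ⟨j - 1, by omega⟩
        simp only at h
        refine ⟨⟨j - 1, by omega⟩, ?_, ?_⟩
        · rw [Fin.lt_def]; simp only; split_ifs at h <;> omega
        · apply Fin.ext; split_ifs at h <;> omega
  · ext j
    simp only [RLMv, Finset.mem_image, Finset.mem_filter, Finset.mem_univ, true_and]
    have hl := hv ⟨n - 1, by omega⟩
    simp only at hl
    constructor
    · rintro ⟨i, hi, rfl⟩
      have h := hv i
      have hi2 := i.2
      have h2 := hi ⟨n - 1, by omega⟩
      simp only [Fin.lt_def] at h2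
      split_ifs at h hl <;> omega
    · intro hj
      by_cases hjk : (j : ℕ) + 1 < k
      · have h := hv ⟨j + 1, by omega⟩
        rw [if_neg (Nat.succ_ne_zero _), if_pos hjk] at h
        simp only at h
        refine ⟨⟨j + 1, by omega⟩, ?_, ?_⟩
        · intro l hlt
          have h3 := hv l
          have := l.2
          simp only [Fin.lt_def] at hlt ⊢
          split_ifs at h3 <;> omega
        · apply Fin.ext; omega
      · refine ⟨⟨n - 1, by omega⟩, ?_, ?_⟩
        · intro l hlt
          have := l.2
          simp only [Fin.lt_def] at hlt
          omega
        · apply Fin.ext; split_ifs at hl <;> omega
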